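/- Let N ≥ 1 and b, e be finite dimensions. Let T and S be finite sets. For each t ∈ T let 𝓔_t ⊆ {0,1}^N, pairwise disjoint over t, with orthogonal projections (E^t_z)_{z∈𝓔_t} on ℂ^b satisfying E^t_z E^t_{z'} = 0 for z ≠ z'; for each s ∈ S let 𝓕_s ⊆ {0,1}^N, pairwise disjoint over s, with orthogonal projections (F^s_x)_{x∈𝓕_s} on ℂ^e satisfying F^s_x F^s_{x'} = 0 for x ≠ x'. Define P̂ = Σ_{t∈T} Σ_{z∈𝓔_t} Z_z ⊗ E^t_z ⊗ I_e and Q̂ = Σ_{s∈S} Σ_{x∈𝓕_s} X_x ⊗ I_b ⊗ F^s_x. Then for every density matrix Θ on ℂ^({0,1}^N) ⊗ ℂ^b ⊗ ℂ^e, tr(Θ P̂) + tr(Θ Q̂) ≤ 1 + (2 |T| |S| 2^(−N))^{1/2}. In particular, if |T| ≤ 2^{l+1} and |S| ≤ 2^{m+1} for integers l, m ≥ 0, then tr(Θ P̂) + tr(Θ Q̂) ≤ 1 + 2^{(l+m−N+3)/2}. -/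

import Mathlib

/-!
The Landau–Pollak relation `landau_pollak_trace` gives `tr(Θ P̂) + tr(Θ Q̂) ≤ 1 + ‖P̂ Q̂‖` for the
projections `P̂`, `Q̂`, so the operator norm `‖P̂ Q̂‖` has to be bounded.

Write `P̂ = ∑ t, P_t` and `Q̂ = ∑ s, Q_s`. Each of the two families consists of mutually orthogonal
projections, because the index sets `𝓔_t` (resp. `𝓕_s`) are disjoint. For one pair of blocks,
mutual unbiasedness of the two bases, `X_x Z_z X_x = 2^(-N) X_x`, yields
`Q_s P_t Q_s = 2^(-N) ∑ X_x ⊗ E^t_z ⊗ F^s_x`, which is `2^(-N)` times a projection, hence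
`‖P_t Q_s‖² ≤ 2^(-N)` (`norm_Pblock_mul_Qblock_sq_le`). The C⋆-identity and orthogonality turn this
into `‖P̂ Q̂‖² ≤ |T| |S| 2^(-N)` (`norm_sum_mul_sum_sq_le`), which is stronger than required by a
factor `2`.
-/

open Matrix
open scoped Kronecker ComplexOrder

noncomputable section

/-- Standard basis vector `e_z` of `ℂ^({0,1}^N)`. -/
def ketVec (N : ℕ) (z : Fin N → Bool) : (Fin N → Bool) → ℂ := fun w =>
  if w = z then 1 else 0

/-- Hadamard basis vector `x̄(w) = 2^(−N/2)·(−1)^(x·w)`. -/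
def hadVec (N : ℕ) (x : Fin N → Bool) : (Fin N → Bool) → ℂ := fun w =>
  ((-1 : ℂ) ^ (Finset.univ.filter fun i => x i && w i).card) / ((Real.sqrt 2 ^ N : ℝ) : ℂ)

/-- Outer product `v v^*`. -/
def outer {ι : Type*} (v : ι → ℂ) : Matrix ι ι ℂ :=
  Matrix.vecMulVec v (fun j => (starRingEnd ℂ) (v j))

/-- `Z_z = e_z e_z^*`. -/
def Zproj (N : ℕ) (z : Fin N → Bool) : Matrix (Fin N → Bool) (Fin N → Bool) ℂ :=
  outer (ketVec N z)

/-- `X_x = x̄ x̄^*`. -/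
def Xproj (N : ℕ) (x : Fin N → Bool) : Matrix (Fin N → Bool) (Fin N → Bool) ℂ :=
  outer (hadVec N x)

/-- `P̂ = Σ_{t∈T} Σ_{z∈𝓔_t} Z_z ⊗ E^t_z ⊗ I_e`. -/
def Phat (N b e : ℕ) {T : Type*} [Fintype T]
    (𝓔 : T → Finset (Fin N → Bool))
    (E : T → (Fin N → Bool) → Matrix (Fin b) (Fin b) ℂ) :
    Matrix (((Fin N → Bool) × Fin b) × Fin e) (((Fin N → Bool) × Fin b) × Fin e) ℂ :=
  ∑ t, ∑ z ∈ 𝓔 t, (Zproj N z ⊗ₖ E t z) ⊗ₖ (1 : Matrix (Fin e) (Fin e) ℂ)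

/-- `Q̂ = Σ_{s∈S} Σ_{x∈𝓕_s} X_x ⊗ I_b ⊗ F^s_x`. -/
def Qhat (N b e : ℕ) {S : Type*} [Fintype S]
    (𝓕 : S → Finset (Fin N → Bool))
    (F : S → (Fin N → Bool) → Matrix (Fin e) (Fin e) ℂ) :
    Matrix (((Fin N → Bool) × Fin b) × Fin e) (((Fin N → Bool) × Fin b) × Fin e) ℂ :=
  ∑ s, ∑ x ∈ 𝓕 s, (Xproj N x ⊗ₖ (1 : Matrix (Fin b) (Fin b) ℂ)) ⊗ₖ F s x

/-! ### Products of sums of orthogonal projections in a C⋆-ring -/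

section CStar

variable {A : Type*} [NonUnitalNormedRing A] [StarRing A] [CStarRing A]

theorem isStarProjection_sum_of_orthogonal {R ι : Type*} [NonUnitalRing R] [StarRing R]
    (s : Finset ι) (p : ι → R) (hp : ∀ i ∈ s, IsStarProjection (p i))
    (horth : ∀ i ∈ s, ∀ j ∈ s, i ≠ j → p i * p j = 0) :
    IsStarProjection (∑ i ∈ s, p i) := by
  rw [isStarProjection_iff']
  constructor
  · rw [Finset.sum_mul_sum]
    refine Finset.sum_congr rfl fun i hi => ?_
    rw [Finset.sum_eq_single_of_mem i hi fun j hj hji => horth i hi j hj hji.symm]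
    exact (hp i hi).isIdempotentElem
  · rw [star_sum]
    exact Finset.sum_congr rfl fun i hi => (hp i hi).isSelfAdjoint

theorem norm_mul_sq_eq_norm_conj {p q : A} (hp : IsStarProjection p) (hq : IsStarProjection q) :
    ‖p * q‖ ^ 2 = ‖q * p * q‖ := by
  rw [sq, ← CStarRing.norm_star_mul_self, star_mul, hp.isSelfAdjoint.star_eq,
    hq.isSelfAdjoint.star_eq, mul_assoc, ← mul_assoc p, hp.isIdempotentElem.eq, mul_assoc]

theorem norm_mul_sq_eq_norm_conj' {p q : A} (hp : IsStarProjection p) (hq : IsStarProjection q) :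
    ‖p * q‖ ^ 2 = ‖p * q * p‖ := by
  rw [← norm_mul_sq_eq_norm_conj hq hp, ← norm_star (p * q), star_mul, hp.isSelfAdjoint.star_eq,
    hq.isSelfAdjoint.star_eq]

/-- If all products of two families of orthogonal projections satisfy `‖p t * q s‖² ≤ c`, then
`‖PQ‖² ≤ |T||S|c` for the sums `P`, `Q`. With the C⋆-identity,
`‖PQ‖² = ‖QPQ‖ ≤ ∑ t, ‖Q p_t Q‖ = ∑ t, ‖p_t Q‖²`, and in the same way
`‖p_t Q‖² = ‖p_t Q p_t‖ ≤ ∑ s, ‖p_t q_s‖²`. -/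
theorem norm_sum_mul_sum_sq_le {T S : Type*} [Fintype T] [Fintype S] (p : T → A) (q : S → A)
    (hp : ∀ t, IsStarProjection (p t)) (hq : ∀ s, IsStarProjection (q s))
    (hpo : ∀ t t', t ≠ t' → p t * p t' = 0) (hqo : ∀ s s', s ≠ s' → q s * q s' = 0)
    {c : ℝ} (hc : ∀ t s, ‖p t * q s‖ ^ 2 ≤ c) :
    ‖(∑ t, p t) * ∑ s, q s‖ ^ 2 ≤ Fintype.card T * Fintype.card S * c := by
  have hP : IsStarProjection (∑ t, p t) :=
    isStarProjection_sum_of_orthogonal _ _ (fun i _ => hp i) fun i _ j _ => hpo i j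
  have hQ : IsStarProjection (∑ s, q s) :=
    isStarProjection_sum_of_orthogonal _ _ (fun i _ => hq i) fun i _ j _ => hqo i j
  have h1 (t : T) : ‖p t * ∑ s, q s‖ ^ 2 ≤ Fintype.card S * c := by
    rw [norm_mul_sq_eq_norm_conj' (hp t) hQ, Finset.mul_sum, Finset.sum_mul]
    refine (norm_sum_le _ _).trans ?_
    exact (Finset.sum_le_card_nsmul _ _ c fun s _ =>
      (norm_mul_sq_eq_norm_conj' (hp t) (hq s)).symm.trans_le (hc t s)).trans_eq (by simp)
  rw [norm_mul_sq_eq_norm_conj hP hQ, Finset.mul_sum _ p, Finset.sum_mul]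
  refine (norm_sum_le _ _).trans ?_
  refine (Finset.sum_le_card_nsmul _ _ _ fun t _ =>
    (norm_mul_sq_eq_norm_conj (hp t) hQ).symm.trans_le (h1 t)).trans_eq ?_
  rw [nsmul_eq_mul, Finset.card_univ, mul_assoc]

end CStar

/-! ### The Landau–Pollak uncertainty relation -/

/-- Landau–Pollak for a vector `x`: put `s = ‖px‖² + ‖qx‖² = Re⟪x, px + qx⟫`. Cauchy–Schwarz gives
`s² ≤ ‖x‖² ‖px + qx‖²`, while `⟪px, qx⟫ = ⟪px, (pq)(qx)⟫` gives `‖px + qx‖² ≤ (1 + ‖pq‖) s`. -/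
theorem landau_pollak {H : Type*} [NormedAddCommGroup H] [InnerProductSpace ℂ H] [CompleteSpace H]
    {p q : H →L[ℂ] H} (hp : IsStarProjection p) (hq : IsStarProjection q) (x : H) :
    (inner ℂ x (p x)).re + (inner ℂ x (q x)).re ≤ (1 + ‖p * q‖) * ‖x‖ ^ 2 := by
  have key (r : H →L[ℂ] H) (hr : IsStarProjection r) (u v : H) :
      inner ℂ (r u) v = inner ℂ u (r v) := by
    have := ContinuousLinearMap.adjoint_inner_left r v u
    rwa [← ContinuousLinearMap.star_eq_adjoint, hr.isSelfAdjoint.star_eq] at this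
  have idem (r : H →L[ℂ] H) (hr : IsStarProjection r) (u : H) : r (r u) = r u :=
    DFunLike.congr_fun hr.isIdempotentElem.eq u
  have hsq (r : H →L[ℂ] H) (hr : IsStarProjection r) : (inner ℂ x (r x)).re = ‖r x‖ ^ 2 := by
    rw [← idem r hr x, ← key r hr, idem r hr]
    exact inner_self_eq_norm_sq (𝕜 := ℂ) (r x)
  -- `p` and `q` may be reinserted in front of `p x` and `q x`, which produces the factor `‖p * q‖`
  have hcross : (inner ℂ (p x) (q x)).re ≤ ‖p * q‖ * (‖p x‖ * ‖q x‖) := by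
    have : inner ℂ (p x) (q x) = inner ℂ (p x) ((p * q) (q x)) := by
      rw [mul_apply_eq_comp, idem q hq, ← key p hp, idem p hp]
    rw [this]
    calc _ ≤ ‖inner ℂ (p x) ((p * q) (q x))‖ := Complex.re_le_norm _
      _ ≤ ‖p x‖ * ‖(p * q) (q x)‖ := norm_inner_le_norm _ _
      _ ≤ ‖p x‖ * (‖p * q‖ * ‖q x‖) := by gcongr; exact (p * q).le_opNorm _
      _ = _ := by ring
  have hadd : ‖p x + q x‖ ^ 2 = ‖p x‖ ^ 2 + 2 * (inner ℂ (p x) (q x)).re + ‖q x‖ ^ 2 :=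
    norm_add_sq (𝕜 := ℂ) (p x) (q x)
  have hcs : ‖p x‖ ^ 2 + ‖q x‖ ^ 2 ≤ ‖x‖ * ‖p x + q x‖ := by
    rw [← hsq p hp, ← hsq q hq, ← Complex.add_re, ← inner_add_right]
    exact (Complex.re_le_norm _).trans (norm_inner_le_norm _ _)
  rw [hsq p hp, hsq q hq]
  set s := ‖p x‖ ^ 2 + ‖q x‖ ^ 2 with hs
  have hc : 0 ≤ ‖p * q‖ := norm_nonneg _
  have hsum : ‖p x + q x‖ ^ 2 ≤ (1 + ‖p * q‖) * s := by
    -- `2 ‖p x‖ ‖q x‖ ≤ s`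
    nlinarith [mul_nonneg hc (sq_nonneg (‖p x‖ - ‖q x‖))]
  have hs0 : 0 ≤ s := by positivity
  have hs2 : s ^ 2 ≤ ‖x‖ ^ 2 * ((1 + ‖p * q‖) * s) := by
    calc s ^ 2 ≤ (‖x‖ * ‖p x + q x‖) ^ 2 := by gcongr
      _ = ‖x‖ ^ 2 * ‖p x + q x‖ ^ 2 := by ring
      _ ≤ _ := by gcongr
  rcases hs0.eq_or_lt with h0 | h0
  · rw [← h0]; positivity
  · refine le_of_mul_le_mul_right ?_ h0
    linarith

section MatrixForm

open scoped Matrix.Norms.L2Operator MatrixOrder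

variable {n : Type*} [Fintype n] [DecidableEq n]

theorem re_trace_mul_nonneg {Θ M : Matrix n n ℂ} (hΘ : Θ.PosSemidef) (hM : M.PosSemidef) :
    0 ≤ (Θ * M).trace.re := by
  obtain ⟨C, rfl⟩ := CStarAlgebra.nonneg_iff_eq_star_mul_self.mp hΘ.nonneg
  rw [mul_assoc, Matrix.trace_mul_comm]
  exact (Complex.le_def.mp (hM.mul_mul_conjTranspose_same C).trace_nonneg).1

/-- Landau–Pollak for a density matrix: the vector form says that `(1 + ‖PQ‖) • 1 - P - Q` is
positive semidefinite, so its trace against `Θ` is nonnegative. -/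
theorem landau_pollak_trace {P Q Θ : Matrix n n ℂ} (hP : IsStarProjection P)
    (hQ : IsStarProjection Q) (hΘ : Θ.PosSemidef) (htr : Θ.trace = 1) :
    (Θ * P).trace.re + (Θ * Q).trace.re ≤ 1 + ‖P * Q‖ := by
  have hM : (((1 + ‖P * Q‖ : ℝ) : ℂ) • (1 : Matrix n n ℂ) - (P + Q)).PosSemidef := by
    have hherm : (((1 + ‖P * Q‖ : ℝ) : ℂ) • (1 : Matrix n n ℂ) - (P + Q)).IsHermitian := by
      have h1 := hP.isSelfAdjoint.star_eq
      have h2 := hQ.isSelfAdjoint.star_eq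
      rw [Matrix.star_eq_conjTranspose] at h1 h2
      simp [Matrix.IsHermitian, h1, h2]
    rw [Matrix.posSemidef_iff_dotProduct_mulVec]
    refine ⟨hherm, fun x => ?_⟩
    have hx := landau_pollak (hP.map (Matrix.toEuclideanCLM (n := n) (𝕜 := ℂ)))
      (hQ.map (Matrix.toEuclideanCLM (n := n) (𝕜 := ℂ))) (WithLp.toLp 2 x)
    rw [← map_mul, ← Matrix.cstar_norm_def] at hx
    rw [Complex.nonneg_iff]
    refine ⟨?_, ?_⟩
    · have hn : ‖WithLp.toLp 2 x‖ ^ 2 = (star x ⬝ᵥ x).re := by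
        rw [← inner_self_eq_norm_sq (𝕜 := ℂ), EuclideanSpace.inner_toLp_toLp, dotProduct_comm]
        rfl
      rw [hn] at hx
      simp only [Matrix.toEuclideanCLM_toLp, EuclideanSpace.inner_toLp_toLp] at hx
      rw [dotProduct_comm _ (star x), dotProduct_comm _ (star x)] at hx
      rw [Matrix.sub_mulVec, Matrix.add_mulVec, Matrix.smul_mulVec, Matrix.one_mulVec,
        dotProduct_sub, dotProduct_add, dotProduct_smul, smul_eq_mul, Complex.sub_re,
        Complex.add_re, Complex.re_ofReal_mul]
      linarith
    · exact (hherm.im_star_dotProduct_mulVec_self x).symm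
  have := re_trace_mul_nonneg hΘ hM
  rw [mul_sub, mul_add, Matrix.trace_sub, Matrix.trace_add, Matrix.mul_smul, mul_one,
    Matrix.trace_smul, htr, smul_eq_mul, mul_one, Complex.sub_re, Complex.add_re,
    Complex.ofReal_re] at this
  linarith

end MatrixForm

/-! ### The two bases -/

section Kronecker

variable {m n : Type*} [Fintype m] [Fintype n]

theorem isStarProjection_kronecker {A : Matrix m m ℂ} {B : Matrix n n ℂ}
    (hA : IsStarProjection A) (hB : IsStarProjection B) : IsStarProjection (A ⊗ₖ B) := by
  rw [isStarProjection_iff'] at *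
  rw [Matrix.star_eq_conjTranspose] at *
  rw [← Matrix.mul_kronecker_mul, Matrix.conjTranspose_kronecker, hA.1, hA.2, hB.1, hB.2]
  exact ⟨rfl, rfl⟩

end Kronecker

theorem outer_mul_outer {ι : Type*} [Fintype ι] (v w : ι → ℂ) :
    outer v * outer w = (star v ⬝ᵥ w) • Matrix.vecMulVec v (star w) := by
  change Matrix.vecMulVec v (star v) * Matrix.vecMulVec w (star w) = _
  rw [Matrix.vecMulVec_mul_vecMulVec, Matrix.vecMulVec_smul]

theorem outer_mul_outer_mul_outer {ι : Type*} [Fintype ι] (v w : ι → ℂ) :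
    outer v * outer w * outer v = ((star v ⬝ᵥ w) * (star w ⬝ᵥ v)) • outer v := by
  rw [outer_mul_outer, Matrix.smul_mul]
  change _ • (_ * Matrix.vecMulVec v (star v)) = _ • Matrix.vecMulVec v (star v)
  rw [Matrix.vecMulVec_mul_vecMulVec, Matrix.vecMulVec_smul, smul_smul]

theorem isStarProjection_outer {ι : Type*} [Fintype ι] {v : ι → ℂ} (hv : star v ⬝ᵥ v = 1) :
    IsStarProjection (outer v) := by
  rw [isStarProjection_iff', outer_mul_outer, hv, one_smul]
  refine ⟨rfl, ?_⟩
  change (Matrix.vecMulVec v (star v))ᴴ = Matrix.vecMulVec v (star v)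
  rw [Matrix.conjTranspose_vecMulVec, star_star]

theorem star_ketVec_dotProduct (N : ℕ) (z : Fin N → Bool) (v : (Fin N → Bool) → ℂ) :
    star (ketVec N z) ⬝ᵥ v = v z := by
  simp [dotProduct, ketVec, apply_ite]

theorem star_ketVec_dotProduct_ketVec (N : ℕ) (z z' : Fin N → Bool) :
    star (ketVec N z) ⬝ᵥ ketVec N z' = if z = z' then 1 else 0 :=
  star_ketVec_dotProduct N z _

/-- The Hadamard vector is a product vector, which makes its inner products factorize over the `N`
coordinates. -/
theorem hadVec_eq_prod (N : ℕ) (x w : Fin N → Bool) :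
    hadVec N x w = ∏ i, ((if x i && w i then (-1 : ℂ) else 1) / (Real.sqrt 2 : ℂ)) := by
  rw [Finset.prod_div_distrib, Finset.prod_ite]
  simp [hadVec]

theorem star_hadVec (N : ℕ) (x : Fin N → Bool) : star (hadVec N x) = hadVec N x := by
  funext w
  simp [hadVec]

theorem hadVec_mul_self (N : ℕ) (x w : Fin N → Bool) :
    hadVec N x w * hadVec N x w = ((2 : ℂ) ^ N)⁻¹ := by
  have h : (Real.sqrt 2 : ℂ) * Real.sqrt 2 = 2 := by
    rw [← Complex.ofReal_mul, Real.mul_self_sqrt (by norm_num)]; norm_num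
  rw [hadVec, div_mul_div_comm, ← mul_pow, Complex.ofReal_pow, ← mul_pow, h]
  norm_num

theorem star_hadVec_dotProduct_hadVec (N : ℕ) (x x' : Fin N → Bool) :
    star (hadVec N x) ⬝ᵥ hadVec N x' = if x = x' then 1 else 0 := by
  have h : (Real.sqrt 2 : ℂ) * Real.sqrt 2 = 2 := by
    rw [← Complex.ofReal_mul, Real.mul_self_sqrt (by norm_num)]; norm_num
  have hfac (a b : Bool) : ∑ c : Bool, ((if a && c then (-1 : ℂ) else 1) / (Real.sqrt 2 : ℂ)) *
      ((if b && c then (-1 : ℂ) else 1) / (Real.sqrt 2 : ℂ)) = if a = b then 1 else 0 := by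
    cases a <;> cases b <;>
      simp only [Fintype.sum_bool, div_mul_div_comm, h] <;> norm_num
  simp_rw [star_hadVec, dotProduct, hadVec_eq_prod, ← Finset.prod_mul_distrib]
  rw [← Fintype.prod_sum (fun i c => ((if x i && c then (-1 : ℂ) else 1) / (Real.sqrt 2 : ℂ)) *
      ((if x' i && c then (-1 : ℂ) else 1) / (Real.sqrt 2 : ℂ)))]
  simp_rw [hfac, Finset.prod_ite_zero, funext_iff]
  simp

theorem isStarProjection_Zproj (N : ℕ) (z : Fin N → Bool) : IsStarProjection (Zproj N z) :=
  isStarProjection_outer (by simp [star_ketVec_dotProduct_ketVec])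

theorem isStarProjection_Xproj (N : ℕ) (x : Fin N → Bool) : IsStarProjection (Xproj N x) :=
  isStarProjection_outer (by simp [star_hadVec_dotProduct_hadVec])

theorem Zproj_mul_Zproj {N : ℕ} {z z' : Fin N → Bool} (h : z ≠ z') :
    Zproj N z * Zproj N z' = 0 := by
  rw [Zproj, Zproj, outer_mul_outer, star_ketVec_dotProduct_ketVec, if_neg h, zero_smul]

theorem Xproj_mul_Xproj {N : ℕ} {x x' : Fin N → Bool} (h : x ≠ x') :
    Xproj N x * Xproj N x' = 0 := by
  rw [Xproj, Xproj, outer_mul_outer, star_hadVec_dotProduct_hadVec, if_neg h, zero_smul]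

/-- The standard and Hadamard bases are mutually unbiased: `|⟨x̄, e_z⟩|² = 2^(-N)`. -/
theorem Xproj_mul_Zproj_mul_Xproj (N : ℕ) (x z : Fin N → Bool) :
    Xproj N x * Zproj N z * Xproj N x = ((2 : ℂ) ^ N)⁻¹ • Xproj N x := by
  rw [Xproj, Zproj, outer_mul_outer_mul_outer, star_ketVec_dotProduct]
  congr 1
  rw [star_hadVec, ← hadVec_mul_self N x z]
  simp [dotProduct, ketVec]

/-! ### The blocks indexed by `t` and `s` -/

section Blocks

open scoped Matrix.Norms.L2Operator

variable {N b e : ℕ}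

/-- `Σ_{z∈𝓔} Z_z ⊗ E_z ⊗ I_e`, the summand of `P̂` at one index `t`. -/
def Pblock (N b e : ℕ) (𝓔 : Finset (Fin N → Bool))
    (E : (Fin N → Bool) → Matrix (Fin b) (Fin b) ℂ) :
    Matrix (((Fin N → Bool) × Fin b) × Fin e) (((Fin N → Bool) × Fin b) × Fin e) ℂ :=
  ∑ z ∈ 𝓔, (Zproj N z ⊗ₖ E z) ⊗ₖ (1 : Matrix (Fin e) (Fin e) ℂ)

/-- `Σ_{x∈𝓕} X_x ⊗ I_b ⊗ F_x`, the summand of `Q̂` at one index `s`. -/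
def Qblock (N b e : ℕ) (𝓕 : Finset (Fin N → Bool))
    (F : (Fin N → Bool) → Matrix (Fin e) (Fin e) ℂ) :
    Matrix (((Fin N → Bool) × Fin b) × Fin e) (((Fin N → Bool) × Fin b) × Fin e) ℂ :=
  ∑ x ∈ 𝓕, (Xproj N x ⊗ₖ (1 : Matrix (Fin b) (Fin b) ℂ)) ⊗ₖ F x

theorem isStarProjection_Pblock {𝓔 : Finset (Fin N → Bool)}
    {E : (Fin N → Bool) → Matrix (Fin b) (Fin b) ℂ} (hE : ∀ z ∈ 𝓔, IsStarProjection (E z)) :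
    IsStarProjection (Pblock N b e 𝓔 E) := by
  refine isStarProjection_sum_of_orthogonal _ _ (fun z hz => isStarProjection_kronecker
    (isStarProjection_kronecker (isStarProjection_Zproj N z) (hE z hz)) (.one _)) ?_
  intro z _ z' _ h
  simp only [← Matrix.mul_kronecker_mul, Zproj_mul_Zproj h, Matrix.zero_kronecker]

theorem isStarProjection_Qblock {𝓕 : Finset (Fin N → Bool)}
    {F : (Fin N → Bool) → Matrix (Fin e) (Fin e) ℂ} (hF : ∀ x ∈ 𝓕, IsStarProjection (F x)) :
    IsStarProjection (Qblock N b e 𝓕 F) := by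
  refine isStarProjection_sum_of_orthogonal _ _ (fun x hx => isStarProjection_kronecker
    (isStarProjection_kronecker (isStarProjection_Xproj N x) (.one _)) (hF x hx)) ?_
  intro x _ x' _ h
  simp only [← Matrix.mul_kronecker_mul, Xproj_mul_Xproj h, Matrix.zero_kronecker]

theorem Pblock_mul_Pblock {𝓔 𝓔' : Finset (Fin N → Bool)} (h : Disjoint 𝓔 𝓔')
    (E E' : (Fin N → Bool) → Matrix (Fin b) (Fin b) ℂ) :
    Pblock N b e 𝓔 E * Pblock N b e 𝓔' E' = 0 := by
  rw [Pblock, Pblock, Finset.sum_mul_sum]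
  refine Finset.sum_eq_zero fun z hz => Finset.sum_eq_zero fun z' hz' => ?_
  have hne : z ≠ z' := fun h' => Finset.disjoint_left.mp h hz (h' ▸ hz')
  simp only [← Matrix.mul_kronecker_mul, Zproj_mul_Zproj hne, Matrix.zero_kronecker]

theorem Qblock_mul_Qblock {𝓕 𝓕' : Finset (Fin N → Bool)} (h : Disjoint 𝓕 𝓕')
    (F F' : (Fin N → Bool) → Matrix (Fin e) (Fin e) ℂ) :
    Qblock N b e 𝓕 F * Qblock N b e 𝓕' F' = 0 := by
  rw [Qblock, Qblock, Finset.sum_mul_sum]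
  refine Finset.sum_eq_zero fun x hx => Finset.sum_eq_zero fun x' hx' => ?_
  have hne : x ≠ x' := fun h' => Finset.disjoint_left.mp h hx (h' ▸ hx')
  simp only [← Matrix.mul_kronecker_mul, Xproj_mul_Xproj hne, Matrix.zero_kronecker]

/-- The operator-norm bound for a single pair of blocks. Since the `F_x` are mutually orthogonal and
`X_x Z_z X_x = 2^(-N) X_x`, one has `Q P Q = 2^(-N) ∑ X_x ⊗ E_z ⊗ F_x`, where the sum over `x, z`
is again a projection; and `‖P Q‖² = ‖Q P Q‖`. -/
theorem norm_Pblock_mul_Qblock_sq_le {𝓔 𝓕 : Finset (Fin N → Bool)}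
    {E : (Fin N → Bool) → Matrix (Fin b) (Fin b) ℂ} (hE : ∀ z ∈ 𝓔, IsStarProjection (E z))
    (hEo : ∀ z ∈ 𝓔, ∀ z' ∈ 𝓔, z ≠ z' → E z * E z' = 0)
    {F : (Fin N → Bool) → Matrix (Fin e) (Fin e) ℂ} (hF : ∀ x ∈ 𝓕, IsStarProjection (F x))
    (hFo : ∀ x ∈ 𝓕, ∀ x' ∈ 𝓕, x ≠ x' → F x * F x' = 0) :
    ‖Pblock N b e 𝓔 E * Qblock N b e 𝓕 F‖ ^ 2 ≤ ((2 : ℝ) ^ N)⁻¹ := by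
  rw [norm_mul_sq_eq_norm_conj (isStarProjection_Pblock hE) (isStarProjection_Qblock hF)]
  have hR : IsStarProjection (∑ y ∈ 𝓕 ×ˢ 𝓔, (Xproj N y.1 ⊗ₖ E y.2) ⊗ₖ F y.1) := by
    refine isStarProjection_sum_of_orthogonal _ _ ?_ ?_
    · intro y hy
      rw [Finset.mem_product] at hy
      exact isStarProjection_kronecker (isStarProjection_kronecker
        (isStarProjection_Xproj N y.1) (hE _ hy.2)) (hF _ hy.1)
    · rintro ⟨x, z⟩ hy ⟨x', z'⟩ hy' hne
      rw [Finset.mem_product] at hy hy'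
      simp only [← Matrix.mul_kronecker_mul]
      by_cases hx : x = x'
      · have hz : z ≠ z' := fun hz => hne (by rw [hx, hz])
        rw [hEo z hy.2 z' hy'.2 hz, Matrix.kronecker_zero, Matrix.zero_kronecker]
      · rw [Xproj_mul_Xproj hx, Matrix.zero_kronecker, Matrix.zero_kronecker]
  have hQPQ : Qblock N b e 𝓕 F * Pblock N b e 𝓔 E * Qblock N b e 𝓕 F =
      ((2 : ℂ) ^ N)⁻¹ • ∑ y ∈ 𝓕 ×ˢ 𝓔, (Xproj N y.1 ⊗ₖ E y.2) ⊗ₖ F y.1 := by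
    rw [Qblock, Pblock, Finset.sum_mul_sum, Finset.sum_mul, Finset.sum_product, Finset.smul_sum]
    refine Finset.sum_congr rfl fun x hx => ?_
    rw [Finset.sum_mul, Finset.smul_sum]
    refine Finset.sum_congr rfl fun z hz => ?_
    rw [Finset.mul_sum, Finset.sum_eq_single_of_mem x hx]
    · simp only [← Matrix.mul_kronecker_mul, mul_one, one_mul, Xproj_mul_Zproj_mul_Xproj,
        Matrix.smul_kronecker, (hF x hx).isIdempotentElem.eq]
    · intro x' hx' hne
      simp only [← Matrix.mul_kronecker_mul, mul_one, hFo x hx x' hx' hne.symm,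
        Matrix.kronecker_zero]
  rw [hQPQ, norm_smul]
  calc _ ≤ ‖((2 : ℂ) ^ N)⁻¹‖ * 1 := by gcongr; exact hR.norm_le
    _ = _ := by simp

end Blocks

/-- For every density matrix `Θ`,
`tr(Θ P̂) + tr(Θ Q̂) ≤ 1 + (2 |T| |S| 2^(−N))^{1/2}`; in particular, if
`|T| ≤ 2^{l+1}` and `|S| ≤ 2^{m+1}` then `tr(Θ P̂) + tr(Θ Q̂) ≤ 1 + 2^{(l+m−N+3)/2}`. -/
theorem trace_Phat_add_trace_Qhat_le (N b e : ℕ) (hN : 1 ≤ N)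
    {T : Type*} [Fintype T] {S : Type*} [Fintype S]
    (𝓔 : T → Finset (Fin N → Bool))
    (hEdisj : ∀ t t', t ≠ t' → Disjoint (𝓔 t) (𝓔 t'))
    (E : T → (Fin N → Bool) → Matrix (Fin b) (Fin b) ℂ)
    (hEproj : ∀ t, ∀ z ∈ 𝓔 t, E t z * E t z = E t z ∧ (E t z)ᴴ = E t z)
    (hEorth : ∀ t, ∀ z ∈ 𝓔 t, ∀ z' ∈ 𝓔 t, z ≠ z' → E t z * E t z' = 0)
    (𝓕 : S → Finset (Fin N → Bool))
    (hFdisj : ∀ s s', s ≠ s' → Disjoint (𝓕 s) (𝓕 s'))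
    (F : S → (Fin N → Bool) → Matrix (Fin e) (Fin e) ℂ)
    (hFproj : ∀ s, ∀ x ∈ 𝓕 s, F s x * F s x = F s x ∧ (F s x)ᴴ = F s x)
    (hForth : ∀ s, ∀ x ∈ 𝓕 s, ∀ x' ∈ 𝓕 s, x ≠ x' → F s x * F s x' = 0)
    (Θ : Matrix (((Fin N → Bool) × Fin b) × Fin e) (((Fin N → Bool) × Fin b) × Fin e) ℂ)
    (hΘpsd : Θ.PosSemidef) (hΘtr : Θ.trace = 1) :
    (Matrix.trace (Θ * Phat N b e 𝓔 E)).re + (Matrix.trace (Θ * Qhat N b e 𝓕 F)).re ≤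
      1 + Real.sqrt (2 * (Fintype.card T) * (Fintype.card S) * ((2 : ℝ) ^ N)⁻¹) ∧
    ∀ l m : ℕ, Fintype.card T ≤ 2 ^ (l + 1) → Fintype.card S ≤ 2 ^ (m + 1) →
      (Matrix.trace (Θ * Phat N b e 𝓔 E)).re + (Matrix.trace (Θ * Qhat N b e 𝓕 F)).re ≤
        1 + (2 : ℝ) ^ (((l : ℝ) + m - N + 3) / 2) := by
  have hbound : (Matrix.trace (Θ * Phat N b e 𝓔 E)).re + (Matrix.trace (Θ * Qhat N b e 𝓕 F)).re ≤
      1 + Real.sqrt (2 * (Fintype.card T) * (Fintype.card S) * ((2 : ℝ) ^ N)⁻¹) := by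
    have hE (t : T) : ∀ z ∈ 𝓔 t, IsStarProjection (E t z) := fun z hz =>
      isStarProjection_iff'.mpr (hEproj t z hz)
    have hF (s : S) : ∀ x ∈ 𝓕 s, IsStarProjection (F s x) := fun x hx =>
      isStarProjection_iff'.mpr (hFproj s x hx)
    have hPt (t : T) : IsStarProjection (Pblock N b e (𝓔 t) (E t)) := isStarProjection_Pblock (hE t)
    have hQs (s : S) : IsStarProjection (Qblock N b e (𝓕 s) (F s)) := isStarProjection_Qblock (hF s)
    have hPo (t t' : T) (h : t ≠ t') :
        Pblock N b e (𝓔 t) (E t) * Pblock N b e (𝓔 t') (E t') = 0 :=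
      Pblock_mul_Pblock (hEdisj t t' h) _ _
    have hQo (s s' : S) (h : s ≠ s') :
        Qblock N b e (𝓕 s) (F s) * Qblock N b e (𝓕 s') (F s') = 0 :=
      Qblock_mul_Qblock (hFdisj s s' h) _ _
    have hP : IsStarProjection (Phat N b e 𝓔 E) :=
      isStarProjection_sum_of_orthogonal _ _ (fun t _ => hPt t) fun t _ t' _ => hPo t t'
    have hQ : IsStarProjection (Qhat N b e 𝓕 F) :=
      isStarProjection_sum_of_orthogonal _ _ (fun s _ => hQs s) fun s _ s' _ => hQo s s'
    open scoped Matrix.Norms.L2Operator in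
    have hPQ : ‖Phat N b e 𝓔 E * Qhat N b e 𝓕 F‖ ^ 2 ≤
        Fintype.card T * Fintype.card S * ((2 : ℝ) ^ N)⁻¹ :=
      norm_sum_mul_sum_sq_le _ _ hPt hQs hPo hQo fun t s => norm_Pblock_mul_Qblock_sq_le (hE t) (hEorth t) (hF s) (hForth s)
    refine (landau_pollak_trace hP hQ hΘpsd hΘtr).trans ?_
    gcongr
    refine Real.le_sqrt_of_sq_le (hPQ.trans ?_)
    -- the estimate holds even without the factor `2`
    rw [mul_assoc 2, mul_assoc 2]
    exact le_mul_of_one_le_left (by positivity) one_le_two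
  refine ⟨hbound, fun l m hl hm => hbound.trans ?_⟩
  have hl' : (Fintype.card T : ℝ) ≤ 2 ^ (l + 1) := by exact_mod_cast hl
  have hm' : (Fintype.card S : ℝ) ≤ 2 ^ (m + 1) := by exact_mod_cast hm
  gcongr
  refine Real.sqrt_le_iff.mpr ⟨by positivity, ?_⟩
  calc _ ≤ 2 * (2 : ℝ) ^ (l + 1) * 2 ^ (m + 1) * ((2 : ℝ) ^ N)⁻¹ := by gcongr
    _ = (2 : ℝ) ^ ((l : ℝ) + m - N + 3) := by
      rw [show (l : ℝ) + m - N + 3 = ((l + m + 3 : ℕ) : ℝ) - (N : ℕ) by push_cast; ring,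
        Real.rpow_sub two_pos, Real.rpow_natCast, Real.rpow_natCast, div_eq_mul_inv]
      ring
    _ = _ := by
      rw [← Real.rpow_natCast, ← Real.rpow_mul zero_le_two]
      congr 1
      push_cast
      ring
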